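/- (Occupation-difference asymptotics for the RWI.) Suppose p < 1. Then, with ε_n = 1_{S_n∈V_0} − 1_{S_n∈V_1} and I_n = Σ_{k=0}^n ε_k and N_n = Σ_{k=1}^n (ε_k − E[ε_k | F_{k−1}]), one has the almost sure identity 2(1−p)·I_n = 1 + N_n − (2p−1)·ε_n for all n ≥ 1; moreover I_n/n → 0 almost surely, and almost surely I_n² = O(n log n). -/

import Mathlib

open MeasureTheory ProbabilityTheory Real Filter Set
open scoped BigOperators NNReal

noncomputable section

namespace RWI

abbrev E : Type := EuclideanSpace ℝ (Fin 3)

def vec (x y z : ℝ) : E := (EuclideanSpace.equiv (Fin 3) ℝ).symm ![x, y, z]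

/-- The two families of vertices of the `1h` ice lattice. -/
def V (a h : ℝ) (i : Fin 2) : Set E :=
  {v | ∃ k l n : ℤ, v = vec (a * ((i : ℕ) + (3 / 2) * k))
      (a * ((Real.sqrt 3 / 2) * k + Real.sqrt 3 * l)) (h * n)}

/-- Horizontal jump from a vertex of type `i` in direction `j`. -/
def w (a : ℝ) (i : Fin 2) (j : Fin 3) : E :=
  vec (a * Real.cos (2 * (j : ℕ) * π / 3 + (i : ℕ) * π))
      (a * Real.sin (2 * (j : ℕ) * π / 3 + (i : ℕ) * π)) 0

/-- `S` is a random walk on ice with parameters `a, h, p, α, q` and natural filtration `F`. -/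
structure IsRWI {Ω : Type} [MeasurableSpace Ω] (P : Measure Ω)
    (a h p α : ℝ) (q : Fin 2 → Fin 3 → ℝ)
    (S : ℕ → Ω → E) (F : ℕ → MeasurableSpace Ω) : Prop where
  prob : IsProbabilityMeasure P
  ha : 0 < a
  hh : 0 < h
  hp0 : 0 ≤ p
  hp1 : p ≤ 1
  hα0 : 0 < α
  hα1 : α < 1
  hq : ∀ i j, 0 ≤ q i j
  hqsum : ∀ i, q i 0 + q i 1 + q i 2 = 1 - p
  hS0 : ∀ ω, S 0 ω = 0
  hSmeas : ∀ n, Measurable (S n)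
  hF : ∀ n, F n =
    MeasurableSpace.comap (fun ω (k : Fin n) => S ((k : ℕ) + 1) ω - S (k : ℕ) ω)
      MeasurableSpace.pi
  hTrans : ∀ (n : ℕ) (f : E → ℝ), Measurable f → (∃ C, ∀ x, |f x| ≤ C) →
    P[fun ω => f (S (n + 1) ω)|F n] =ᵐ[P]
      fun ω => ∑ i : Fin 2, (V a h i).indicator (fun _ => (1 : ℝ)) (S n ω) *
        (α * p * f (S n ω + vec 0 0 h) + (1 - α) * p * f (S n ω + vec 0 0 (-h)) +
          ∑ j : Fin 3, q i j * f (S n ω + w a i j))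

def uu (q : Fin 2 → Fin 3 → ℝ) (i : Fin 2) : ℝ := q i 1 + q i 2

def vv (q : Fin 2 → Fin 3 → ℝ) (i : Fin 2) : ℝ := q i 1 - q i 2

/-- The drift vector `μ` of the RWI. -/
def muI (a h p α : ℝ) (q : Fin 2 → Fin 3 → ℝ) : E :=
  vec (3 * a / 4 * (-(uu q 0) + uu q 1)) (a * Real.sqrt 3 / 4 * (vv q 0 - vv q 1))
    (h * p * (2 * α - 1))

/-- The vector `θ` of the RWI. -/
def thetaI (a p : ℝ) (q : Fin 2 → Fin 3 → ℝ) : E :=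
  vec (a * ((1 - p) - 3 / 4 * (uu q 0 + uu q 1))) (a * Real.sqrt 3 / 4 * (vv q 0 + vv q 1)) 0

/-- The sign process `ε_n = 1_{S_n ∈ V_0} - 1_{S_n ∈ V_1}`. -/
def epsI {Ω : Type} (a h : ℝ) (S : ℕ → Ω → E) (n : ℕ) (ω : Ω) : ℝ :=
  (V a h 0).indicator (fun _ => (1 : ℝ)) (S n ω) - (V a h 1).indicator (fun _ => (1 : ℝ)) (S n ω)

end RWI

namespace RWI

/-- `I_n = ∑_{k=0}^n ε_k`. -/
def II {Ω : Type} (a h : ℝ) (S : ℕ → Ω → E) (n : ℕ) (ω : Ω) : ℝ :=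
  ∑ k ∈ Finset.range (n + 1), epsI a h S k ω

/-- The sign martingale `N_n = ∑_{k=1}^n (ε_k - E[ε_k | F_{k-1}])`. -/
def NN {Ω : Type} [MeasurableSpace Ω] (P : Measure Ω) (a h : ℝ) (S : ℕ → Ω → E)
    (F : ℕ → MeasurableSpace Ω) (n : ℕ) (ω : Ω) : ℝ :=
  ∑ k ∈ Finset.Icc 1 n, (epsI a h S k ω - (P[fun ω' => epsI a h S k ω'|F (k - 1)]) ω)

end RWI

/-! The sign is an eigenfunction of the transition operator: `E[ε_{n+1} | F_n] = (2p - 1) ε_n`,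
since vertical moves preserve the vertex type and horizontal moves flip it. Hence the predictable
part of the Doob decomposition of `I` is `(2p - 1) (I_n - ε_n)`, which is the identity, with
martingale part `1 + N_n`. This martingale `M` has bounded increments, so `M_n - M_0` is
sub-Gaussian with variance proxy of order `n`, and Borel–Cantelli applied to its tails at levels of
order `√(n log n)` gives `I_n = O(√(n log n))`, from which both asymptotic claims follow. -/

open Asymptotics

section Azuma

variable {Ω : Type*} {m mΩ : MeasurableSpace Ω} {μ : Measure Ω}

lemma exp_mul_le_cosh_add_sinh_div_mul {c y : ℝ} (hy : |y| ≤ c) (t : ℝ) :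
    exp (t * y) ≤ cosh (t * c) + sinh (t * c) / c * y := by
  have hc : 0 ≤ c := (abs_nonneg y).trans hy
  have hyc : |y / c| ≤ 1 := by
    rw [abs_div, abs_of_nonneg hc]
    exact div_le_one_of_le₀ hy hc
  have hy_eq : y / c * c = y := div_mul_cancel_of_imp fun h => by simpa [h] using hy
  calc exp (t * y) = exp (y / c * (t * c)) := by rw [mul_left_comm, hy_eq]
    _ ≤ cosh (t * c) + y / c * sinh (t * c) := exp_mul_le_cosh_add_mul_sinh hyc _
    _ = cosh (t * c) + sinh (t * c) / c * y := by ring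

lemma integral_mul_eq_zero_of_condExp_eq_zero (hm : m ≤ mΩ)
    [SigmaFinite (μ.trim hm)] {X Y : Ω → ℝ} (hX : StronglyMeasurable[m] X)
    (hXY : Integrable (X * Y) μ) (hY : Integrable Y μ) (hY0 : μ[Y | m] =ᵐ[μ] 0) :
    ∫ ω, X ω * Y ω ∂μ = 0 := by
  have hcond : μ[X * Y | m] =ᵐ[μ] 0 := by
    filter_upwards [condExp_mul_of_stronglyMeasurable_left hX hXY hY, hY0] with ω hpull h0
    simp [hpull, h0]
  calc ∫ ω, X ω * Y ω ∂μ = ∫ ω, (μ[X * Y | m]) ω ∂μ := (integral_condExp hm).symm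
    _ = 0 := by simp [integral_congr_ae hcond]

lemma integrable_exp_mul_add_of_abs_le {X Y : Ω → ℝ} {c t : ℝ}
    (hX : Integrable (fun ω => exp (t * X ω)) μ) (hY : AEStronglyMeasurable Y μ)
    (hYc : ∀ᵐ ω ∂μ, |Y ω| ≤ c) : Integrable (fun ω => exp (t * (X ω + Y ω))) μ := by
  simp only [mul_add, exp_add]
  refine hX.mul_bdd (c := exp (|t| * c))
    (continuous_exp.comp_aestronglyMeasurable (hY.const_mul t)) ?_
  filter_upwards [hYc] with ω hω
  rw [norm_of_nonneg (exp_pos _).le, exp_le_exp]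
  calc t * Y ω ≤ |t| * |Y ω| := (le_abs_self _).trans (abs_mul _ _).le
    _ ≤ |t| * c := by gcongr

lemma mgf_add_le_of_condExp_eq_zero [IsFiniteMeasure μ] (hm : m ≤ mΩ)
    {X Y : Ω → ℝ} {c t : ℝ} (hX : StronglyMeasurable[m] X)
    (hX_int : Integrable (fun ω => exp (t * X ω)) μ) (hY : AEStronglyMeasurable Y μ)
    (hYc : ∀ᵐ ω ∂μ, |Y ω| ≤ c) (hY0 : μ[Y | m] =ᵐ[μ] 0) :
    mgf (X + Y) μ t ≤ mgf X μ t * exp ((t * c) ^ 2 / 2) := by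
  set Z : Ω → ℝ := fun ω => exp (t * X ω)
  have hZY_int : Integrable (fun ω => Z ω * Y ω) μ := hX_int.mul_bdd hY hYc
  have hZY : ∫ ω, Z ω * Y ω ∂μ = 0 :=
    integral_mul_eq_zero_of_condExp_eq_zero hm
      (continuous_exp.comp_stronglyMeasurable (hX.const_mul t)) hZY_int (.of_bound hY c hYc) hY0
  calc mgf (X + Y) μ t
      ≤ ∫ ω, (Z ω * cosh (t * c) + sinh (t * c) / c * (Z ω * Y ω)) ∂μ := by
        refine integral_mono_ae (integrable_exp_mul_add_of_abs_le hX_int hY hYc)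
          ((hX_int.mul_const _).add (hZY_int.const_mul _)) ?_
        filter_upwards [hYc] with ω hω
        calc exp (t * (X ω + Y ω)) = Z ω * exp (t * Y ω) := by rw [mul_add, exp_add]
          _ ≤ Z ω * (cosh (t * c) + sinh (t * c) / c * Y ω) := by
            gcongr
            exact exp_mul_le_cosh_add_sinh_div_mul hω t
          _ = _ := by ring
    _ = mgf X μ t * cosh (t * c) := by
        rw [integral_add (hX_int.mul_const _) (hZY_int.const_mul _), integral_mul_const,
          integral_const_mul, hZY, mul_zero, add_zero, mgf]
    _ ≤ mgf X μ t * exp ((t * c) ^ 2 / 2) := by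
        gcongr
        · exact mgf_nonneg
        · exact cosh_le_exp_half_sq _

-- Mathlib's Azuma–Hoeffding inequality goes through `condExpKernel` and so needs a standard Borel
-- space; here `Ω` is arbitrary, and the condition on `Y` is on its conditional expectation.
lemma hasSubgaussianMGF_add_of_condExp_eq_zero [IsFiniteMeasure μ]
    (hm : m ≤ mΩ) {X Y : Ω → ℝ} {v c : ℝ≥0} (hX : StronglyMeasurable[m] X)
    (hXv : HasSubgaussianMGF X v μ) (hY : AEStronglyMeasurable Y μ)
    (hYc : ∀ᵐ ω ∂μ, |Y ω| ≤ c) (hY0 : μ[Y | m] =ᵐ[μ] 0) :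
    HasSubgaussianMGF (X + Y) (v + c ^ 2) μ where
  integrable_exp_mul t := integrable_exp_mul_add_of_abs_le (hXv.integrable_exp_mul t) hY hYc
  mgf_le t :=
    calc mgf (X + Y) μ t ≤ mgf X μ t * exp ((t * c) ^ 2 / 2) :=
          mgf_add_le_of_condExp_eq_zero hm hX (hXv.integrable_exp_mul t) hY hYc hY0
      _ ≤ exp (v * t ^ 2 / 2) * exp ((t * c) ^ 2 / 2) := by
          gcongr
          exact hXv.mgf_le t
      _ = exp ((v + c ^ 2 : ℝ≥0) * t ^ 2 / 2) := by
          rw [← exp_add]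
          push_cast
          ring_nf

lemma hasSubgaussianMGF_martingale_sub [IsZeroOrProbabilityMeasure μ] {ℱ : Filtration ℕ mΩ}
    {M : ℕ → Ω → ℝ} {c : ℝ≥0} (hM : Martingale M ℱ μ)
    (hMc : ∀ᵐ ω ∂μ, ∀ n, |M (n + 1) ω - M n ω| ≤ c) (n : ℕ) :
    HasSubgaussianMGF (M n - M 0) (n * c ^ 2) μ := by
  induction n with
  | zero => simp
  | succ n ih =>
    have hM_int := hM.integrable
    have hcond : μ[M (n + 1) - M n | ℱ n] =ᵐ[μ] 0 := by
      filter_upwards [condExp_sub (hM_int (n + 1)) (hM_int n) (ℱ n), hM.condExp_ae_eq n.le_succ,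
        hM.condExp_ae_eq (le_refl n)] with ω hsub hsucc hself
      simp [hsub, hsucc, hself]
    have hadd := hasSubgaussianMGF_add_of_condExp_eq_zero (ℱ.le n)
      ((hM.stronglyMeasurable n).sub ((hM.stronglyMeasurable 0).mono (ℱ.mono n.zero_le))) ih
      ((hM_int (n + 1)).sub (hM_int n)).aestronglyMeasurable (hMc.mono fun ω h => h n) hcond
    convert hadd using 1
    · abel
    · push_cast
      ring

end Azuma

section LimitBounds

variable {Ω : Type*} {mΩ : MeasurableSpace Ω} {μ : Measure Ω}

lemma isFiniteMeasure_of_hasSubgaussianMGF {X : Ω → ℝ} {v : ℝ≥0} (hX : HasSubgaussianMGF X v μ) :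
    IsFiniteMeasure μ := by
  simpa [integrable_const_iff] using hX.integrable_exp_mul 0

lemma measureReal_sqrt_lt_le_exp_neg {X : Ω → ℝ} {v : ℝ≥0} (hX : HasSubgaussianMGF X v μ) {r : ℝ}
    (hr : 0 ≤ r) : μ.real {ω | √(2 * v * r) < X ω} ≤ exp (-r) := by
  rcases eq_or_ne v 0 with rfl | hv
  · have hzero : ∀ᵐ ω ∂μ, ω ∉ {ω | √(2 * (0 : ℝ≥0) * r) < X ω} := by
      filter_upwards [hX.ae_eq_zero_of_hasSubgaussianMGF_zero] with ω hω
      simp [hω]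
    rw [measureReal_def, measure_eq_zero_iff_ae_notMem.mpr hzero]
    exact (exp_pos _).le
  · have := isFiniteMeasure_of_hasSubgaussianMGF hX
    calc μ.real {ω | √(2 * v * r) < X ω} ≤ μ.real {ω | √(2 * v * r) ≤ X ω} :=
          measureReal_mono (ofPred_subset_ofPred.mpr fun _ => le_of_lt)
      _ ≤ exp (-√(2 * v * r) ^ 2 / (2 * v)) := hX.measure_ge_le (sqrt_nonneg _)
      _ = exp (-r) := by
          rw [sq_sqrt (by positivity)]
          field_simp

lemma summable_exp_neg_two_mul_log : Summable fun n : ℕ => exp (-(2 * log n)) := by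
  refine (summable_one_div_nat_pow.mpr one_lt_two).congr_atTop ?_
  filter_upwards [eventually_gt_atTop 0] with n hn
  rw [exp_neg, two_mul, exp_add, exp_log (by exact_mod_cast hn), one_div, sq]

lemma ae_eventually_le_sqrt_of_hasSubgaussianMGF {X : ℕ → Ω → ℝ} {v : ℕ → ℝ≥0}
    (hX : ∀ n, HasSubgaussianMGF (X n) (v n) μ) :
    ∀ᵐ ω ∂μ, ∀ᶠ n in atTop, X n ω ≤ √(2 * v n * (2 * log n)) := by
  have := isFiniteMeasure_of_hasSubgaussianMGF (hX 0)
  have htail (n : ℕ) : μ {ω | √(2 * v n * (2 * log n)) < X n ω} ≤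
      ENNReal.ofReal (exp (-(2 * log n))) := by
    rw [← ofReal_measureReal]
    exact ENNReal.ofReal_le_ofReal <| measureReal_sqrt_lt_le_exp_neg (hX n) <|
      mul_nonneg zero_le_two (log_natCast_nonneg n)
  have hsum : ∑' n, μ {ω | √(2 * v n * (2 * log n)) < X n ω} ≠ ⊤ :=
    ne_top_of_le_ne_top summable_exp_neg_two_mul_log.tsum_ofReal_ne_top (ENNReal.tsum_le_tsum htail)
  filter_upwards [ae_eventually_notMem hsum] with ω hω
  exact hω.mono fun n hn => not_lt.mp hn

lemma ae_eventually_abs_le_sqrt_of_hasSubgaussianMGF {X : ℕ → Ω → ℝ} {v : ℕ → ℝ≥0}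
    (hX : ∀ n, HasSubgaussianMGF (X n) (v n) μ) :
    ∀ᵐ ω ∂μ, ∀ᶠ n in atTop, |X n ω| ≤ √(2 * v n * (2 * log n)) := by
  filter_upwards [ae_eventually_le_sqrt_of_hasSubgaussianMGF hX,
    ae_eventually_le_sqrt_of_hasSubgaussianMGF fun n => (hX n).neg] with ω hupper hlower
  filter_upwards [hupper, hlower] with n hn hn'
  exact abs_le'.mpr ⟨hn, hn'⟩

lemma tendsto_sqrt_mul_log_atTop : Tendsto (fun n : ℕ => √(n * log n)) atTop atTop :=
  tendsto_sqrt_atTop.comp <| (tendsto_id.atTop_mul_atTop₀ tendsto_log_atTop).comp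
    tendsto_natCast_atTop_atTop

lemma const_isBigO_sqrt_mul_log (c : ℝ) :
    (fun _ : ℕ => c) =O[atTop] fun n : ℕ => √(n * log n) :=
  (isLittleO_const_left.mpr <| .inr <|
    tendsto_norm_atTop_atTop.comp tendsto_sqrt_mul_log_atTop).isBigO

lemma sqrt_mul_log_isLittleO_natCast :
    (fun n : ℕ => √(n * log n)) =o[atTop] fun n : ℕ => (n : ℝ) := by
  have hlog : (fun n : ℕ => log n) =o[atTop] fun n : ℕ => (n : ℝ) :=
    isLittleO_log_id_atTop.comp_tendsto tendsto_natCast_atTop_atTop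
  refine .of_pow (n := 2) ?_ two_ne_zero
  refine ((isBigO_refl _ _).mul_isLittleO hlog).congr (fun n => ?_) fun n => (sq _).symm
  exact (sq_sqrt (mul_nonneg n.cast_nonneg (log_natCast_nonneg n))).symm

theorem ae_isBigO_sqrt_mul_log_of_martingale [IsZeroOrProbabilityMeasure μ] {ℱ : Filtration ℕ mΩ}
    {M : ℕ → Ω → ℝ} {c : ℝ} (hM : Martingale M ℱ μ)
    (hMc : ∀ᵐ ω ∂μ, ∀ n, |M (n + 1) ω - M n ω| ≤ c) :
    ∀ᵐ ω ∂μ, (fun n => M n ω) =O[atTop] fun n : ℕ => √(n * log n) := by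
  have hMc' : ∀ᵐ ω ∂μ, ∀ n, |M (n + 1) ω - M n ω| ≤ c.toNNReal :=
    hMc.mono fun ω h n => (h n).trans (le_coe_toNNReal c)
  filter_upwards [ae_eventually_abs_le_sqrt_of_hasSubgaussianMGF
    (hasSubgaussianMGF_martingale_sub hM hMc')] with ω hω
  have hsub : (fun n => M n ω - M 0 ω) =O[atTop] fun n : ℕ => √(n * log n) := by
    refine .of_bound (2 * c.toNNReal) (hω.mono fun n hn => ?_)
    rw [norm_eq_abs, norm_of_nonneg (sqrt_nonneg _)]
    refine hn.trans_eq ?_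
    rw [← sqrt_sq (show 0 ≤ 2 * (c.toNNReal : ℝ) by positivity), ← sqrt_mul (sq_nonneg _)]
    push_cast
    ring_nf
  simpa using hsub.add (const_isBigO_sqrt_mul_log (M 0 ω))

end LimitBounds

section Autoregressive

variable {Ω : Type*} {mΩ : MeasurableSpace Ω} {μ : Measure Ω} {ℱ : Filtration ℕ mΩ}
  {X : ℕ → Ω → ℝ} {ρ : ℝ}

/-- The partial sum process `X_0 + ⋯ + X_n` of a real process `X`; the upper index is included. -/
def partialSum (X : ℕ → Ω → ℝ) (n : ℕ) (ω : Ω) : ℝ :=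
  ∑ k ∈ Finset.range (n + 1), X k ω

lemma partialSum_succ_sub (X : ℕ → Ω → ℝ) (n : ℕ) :
    partialSum X (n + 1) - partialSum X n = X (n + 1) := by
  ext ω
  simp [partialSum, Finset.sum_range_succ _ (n + 1)]

lemma martingalePart_partialSum (X : ℕ → Ω → ℝ) (n : ℕ) (ω : Ω) :
    martingalePart (partialSum X) ℱ μ n ω =
      X 0 ω + ∑ k ∈ Finset.range n, (X (k + 1) ω - (μ[X (k + 1) | ℱ k]) ω) := by
  simp [martingalePart_eq_sum, partialSum_succ_sub, partialSum]

lemma ae_one_sub_mul_partialSum_eq (hX : ∀ n, μ[X (n + 1) | ℱ n] =ᵐ[μ] fun ω => ρ * X n ω) :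
    ∀ᵐ ω ∂μ, ∀ n, (1 - ρ) * partialSum X n ω =
      martingalePart (partialSum X) ℱ μ n ω - ρ * X n ω := by
  filter_upwards [ae_all_iff.mpr hX] with ω hω n
  have hpred : predictablePart (partialSum X) ℱ μ n ω = ρ * (partialSum X n ω - X n ω) := by
    simp [predictablePart, partialSum_succ_sub, hω, ← Finset.mul_sum, partialSum,
      Finset.sum_range_succ]
  rw [martingalePart, Pi.sub_apply, hpred]
  ring

theorem ae_isBigO_partialSum [IsZeroOrProbabilityMeasure μ] {b : ℝ}
    (hX : StronglyAdapted ℱ X) (hXb : ∀ᵐ ω ∂μ, ∀ n, |X n ω| ≤ b)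
    (hXρ : ∀ n, μ[X (n + 1) | ℱ n] =ᵐ[μ] fun ω => ρ * X n ω) (hρ : ρ ≠ 1) :
    ∀ᵐ ω ∂μ, (fun n => partialSum X n ω) =O[atTop] fun n : ℕ => √(n * log n) := by
  have hadapted : StronglyAdapted ℱ (partialSum X) := fun n =>
    Finset.stronglyMeasurable_fun_sum _ fun k hk =>
      (hX k).mono (ℱ.mono (Finset.mem_range_succ_iff.mp hk))
  have hsum_int (n : ℕ) : Integrable (partialSum X n) μ :=
    integrable_finsetSum _ fun k _ =>
      .of_bound ((hX k).mono (ℱ.le k)).aestronglyMeasurable b (hXb.mono fun ω h => h k)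
  have hincr : ∀ᵐ ω ∂μ, ∀ n, |partialSum X (n + 1) ω - partialSum X n ω| ≤ b :=
    hXb.mono fun ω h n => (congrArg abs (congrFun (partialSum_succ_sub X n) ω)).trans_le (h (n + 1))
  have hmart_incr : ∀ᵐ ω ∂μ, ∀ n, |martingalePart (partialSum X) ℱ μ (n + 1) ω -
      martingalePart (partialSum X) ℱ μ n ω| ≤ 2 * b :=
    martingalePart_bdd_difference ℱ (f := partialSum X) hincr
  filter_upwards [hXb, ae_one_sub_mul_partialSum_eq hXρ,
    ae_isBigO_sqrt_mul_log_of_martingale (martingale_martingalePart hadapted hsum_int)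
      hmart_incr] with ω hb hdecomp hmart
  have hXO : (fun n => X n ω) =O[atTop] fun n : ℕ => √(n * log n) :=
    (IsBigO.of_norm_le hb).trans (const_isBigO_sqrt_mul_log b)
  refine (isBigO_const_mul_left_iff (sub_ne_zero.mpr hρ.symm)).mp ?_
  simp only [hdecomp]
  exact hmart.sub (hXO.const_mul_left ρ)

end Autoregressive

namespace RWI

section Lattice

variable {a h : ℝ} {i j : Fin 2} {v : E}

lemma vec_add (x y z x' y' z' : ℝ) :
    vec x y z + vec x' y' z' = vec (x + x') (y + y') (z + z') := by
  ext i
  fin_cases i <;> simp [vec]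

lemma vec_zero : vec 0 0 0 = 0 := by
  ext i
  fin_cases i <;> simp [vec]

lemma neg_vec (x y z : ℝ) : -vec x y z = vec (-x) (-y) (-z) := by
  ext i
  fin_cases i <;> simp [vec]

lemma measurableSet_V (i : Fin 2) : MeasurableSet (V a h i) := by
  have hV : V a h i = ⋃ (k : ℤ) (l : ℤ) (n : ℤ), {vec (a * ((i : ℕ) + (3 / 2) * k))
      (a * ((√3 / 2) * k + √3 * l)) (h * n)} := by
    ext v
    simp [V, eq_comm]
  rw [hV]
  exact (countable_iUnion fun _ => countable_iUnion fun _ => countable_iUnion fun _ =>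
    countable_singleton _).measurableSet

-- The abscissa divided by `a / 2` is congruent to `2 i` modulo `3`.
lemma eq_of_mem_V (ha : a ≠ 0) (hi : v ∈ V a h i) (hj : v ∈ V a h j) : i = j := by
  obtain ⟨k, l, n, rfl⟩ := hi
  obtain ⟨k', l', n', hv⟩ := hj
  have habscissa : a * ((i : ℕ) + 3 / 2 * k) = a * ((j : ℕ) + 3 / 2 * k') := congrArg (· 0) hv
  have hreal : (2 * (i : ℕ) + 3 * k : ℝ) = 2 * (j : ℕ) + 3 * k' := by
    linarith [mul_left_cancel₀ ha habscissa]
  have hcast : 2 * (i : ℕ) + 3 * k = 2 * (j : ℕ) + 3 * k' := by exact_mod_cast hreal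
  omega

lemma zero_mem_V : (0 : E) ∈ V a h 0 :=
  ⟨0, 0, 0, by simp [vec_zero]⟩

lemma add_up_mem_V (hv : v ∈ V a h i) : v + vec 0 0 h ∈ V a h i := by
  obtain ⟨k, l, n, rfl⟩ := hv
  refine ⟨k, l, n + 1, ?_⟩
  rw [vec_add]
  push_cast
  congr 1 <;> ring

lemma add_down_mem_V (hv : v ∈ V a h i) : v + vec 0 0 (-h) ∈ V a h i := by
  obtain ⟨k, l, n, rfl⟩ := hv
  refine ⟨k, l, n - 1, ?_⟩
  rw [vec_add]
  push_cast
  congr 1 <;> ring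

lemma w_zero_zero : w a 0 0 = vec a 0 0 := by
  simp [w]

lemma w_zero_one : w a 0 1 = vec (-a / 2) (a * (√3 / 2)) 0 := by
  have hangle : 2 * π / 3 = π - π / 3 := by ring
  simp only [w, Fin.val_one, Fin.val_zero, Nat.cast_one, Nat.cast_zero, mul_one, zero_mul, add_zero,
    hangle, cos_pi_sub, cos_pi_div_three, sin_pi_sub, sin_pi_div_three]
  ring_nf

lemma w_zero_two : w a 0 2 = vec (-a / 2) (-(a * (√3 / 2))) 0 := by
  have hangle : 2 * 2 * π / 3 = π / 3 + π := by ring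
  simp only [w, Fin.val_two, Fin.val_zero, Nat.cast_ofNat, Nat.cast_zero, zero_mul, add_zero,
    hangle, cos_add_pi, cos_pi_div_three, sin_add_pi, sin_pi_div_three]
  ring_nf

lemma w_one (d : Fin 3) : w a 1 d = -w a 0 d := by
  ext m
  fin_cases m <;> simp [w, vec, cos_add_pi, sin_add_pi]

lemma add_w_zero_mem_V (hv : v ∈ V a h 0) (d : Fin 3) : v + w a 0 d ∈ V a h 1 := by
  obtain ⟨k, l, n, rfl⟩ := hv
  fin_cases d <;> simp only [Fin.zero_eta, Fin.mk_one, Fin.reduceFinMk, w_zero_zero, w_zero_one,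
    w_zero_two, vec_add]
  · refine ⟨k, l, n, ?_⟩
    push_cast [Fin.val_zero, Fin.val_one]
    congr 1 <;> ring
  · refine ⟨k - 1, l + 1, n, ?_⟩
    push_cast [Fin.val_zero, Fin.val_one]
    congr 1 <;> ring
  · refine ⟨k - 1, l, n, ?_⟩
    push_cast [Fin.val_zero, Fin.val_one]
    congr 1 <;> ring

lemma add_w_one_mem_V (hv : v ∈ V a h 1) (d : Fin 3) : v + w a 1 d ∈ V a h 0 := by
  obtain ⟨k, l, n, rfl⟩ := hv
  rw [w_one]
  fin_cases d <;> simp only [Fin.zero_eta, Fin.mk_one, Fin.reduceFinMk, w_zero_zero, w_zero_one,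
    w_zero_two, neg_vec, vec_add]
  · refine ⟨k, l, n, ?_⟩
    push_cast [Fin.val_zero, Fin.val_one]
    congr 1 <;> ring
  · refine ⟨k + 1, l - 1, n, ?_⟩
    push_cast [Fin.val_zero, Fin.val_one]
    congr 1 <;> ring
  · refine ⟨k + 1, l, n, ?_⟩
    push_cast [Fin.val_zero, Fin.val_one]
    congr 1 <;> ring

/-- The type of a lattice vertex as a sign: `1` on `V 0`, `-1` on `V 1`, and `0` off the lattice, so
that `ε_n` is the sign of `S n`. -/
def vertexSign (a h : ℝ) (v : E) : ℝ :=
  (V a h 0).indicator (fun _ => 1) v - (V a h 1).indicator (fun _ => 1) v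

lemma measurable_vertexSign : Measurable (vertexSign a h) :=
  (measurable_const.indicator (measurableSet_V 0)).sub
    (measurable_const.indicator (measurableSet_V 1))

lemma abs_vertexSign_le_one (v : E) : |vertexSign a h v| ≤ 1 := by
  by_cases h0 : v ∈ V a h 0 <;> by_cases h1 : v ∈ V a h 1 <;> simp [vertexSign, h0, h1]

lemma notMem_V_one_of_mem_V_zero (ha : a ≠ 0) (hv : v ∈ V a h 0) : v ∉ V a h 1 :=
  fun hv' => zero_ne_one (eq_of_mem_V ha hv hv')

lemma notMem_V_zero_of_mem_V_one (ha : a ≠ 0) (hv : v ∈ V a h 1) : v ∉ V a h 0 :=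
  fun hv' => zero_ne_one (eq_of_mem_V ha hv' hv)

lemma vertexSign_of_mem_V_zero (ha : a ≠ 0) (hv : v ∈ V a h 0) : vertexSign a h v = 1 := by
  simp [vertexSign, hv, notMem_V_one_of_mem_V_zero ha hv]

lemma vertexSign_of_mem_V_one (ha : a ≠ 0) (hv : v ∈ V a h 1) : vertexSign a h v = -1 := by
  simp [vertexSign, hv, notMem_V_zero_of_mem_V_one ha hv]

end Lattice

section Transition

variable {a h p α : ℝ} {q : Fin 2 → Fin 3 → ℝ} {v : E}

/-- The one-step transition operator of the walk acting on test functions; it vanishes off the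
lattice. -/
def transition (a h p α : ℝ) (q : Fin 2 → Fin 3 → ℝ) (f : E → ℝ) (v : E) : ℝ :=
  ∑ i : Fin 2, (V a h i).indicator (fun _ => 1) v *
    (α * p * f (v + vec 0 0 h) + (1 - α) * p * f (v + vec 0 0 (-h)) +
      ∑ j : Fin 3, q i j * f (v + w a i j))

lemma transition_of_mem_V_zero (ha : a ≠ 0) (hv : v ∈ V a h 0) (f : E → ℝ) :
    transition a h p α q f v = α * p * f (v + vec 0 0 h) + (1 - α) * p * f (v + vec 0 0 (-h)) +
      ∑ j : Fin 3, q 0 j * f (v + w a 0 j) := by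
  simp [transition, hv, notMem_V_one_of_mem_V_zero ha hv]

lemma transition_of_mem_V_one (ha : a ≠ 0) (hv : v ∈ V a h 1) (f : E → ℝ) :
    transition a h p α q f v = α * p * f (v + vec 0 0 h) + (1 - α) * p * f (v + vec 0 0 (-h)) +
      ∑ j : Fin 3, q 1 j * f (v + w a 1 j) := by
  simp [transition, hv, notMem_V_zero_of_mem_V_one ha hv]

lemma transition_vertexSign (ha : a ≠ 0) (hq : ∀ i, q i 0 + q i 1 + q i 2 = 1 - p) (v : E) :
    transition a h p α q (vertexSign a h) v = (2 * p - 1) * vertexSign a h v := by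
  by_cases h0 : v ∈ V a h 0
  · simp only [transition_of_mem_V_zero ha h0, vertexSign_of_mem_V_zero ha h0,
      vertexSign_of_mem_V_zero ha (add_up_mem_V h0),
      vertexSign_of_mem_V_zero ha (add_down_mem_V h0),
      vertexSign_of_mem_V_one ha (add_w_zero_mem_V h0 _), Fin.sum_univ_three]
    linarith [hq 0]
  by_cases h1 : v ∈ V a h 1
  · simp only [transition_of_mem_V_one ha h1, vertexSign_of_mem_V_one ha h1,
      vertexSign_of_mem_V_one ha (add_up_mem_V h1),
      vertexSign_of_mem_V_one ha (add_down_mem_V h1),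
      vertexSign_of_mem_V_zero ha (add_w_one_mem_V h1 _), Fin.sum_univ_three]
    linarith [hq 1]
  simp [transition, vertexSign, h0, h1]

end Transition

namespace IsRWI

variable {Ω : Type} [MeasurableSpace Ω] {P : Measure Ω} {a h p α : ℝ} {q : Fin 2 → Fin 3 → ℝ}
  {S : ℕ → Ω → E} {F : ℕ → MeasurableSpace Ω}

lemma measurable_increment (hRW : IsRWI P a h p α q S F) {k n : ℕ} (hk : k < n) :
    Measurable[F n] (fun ω => S (k + 1) ω - S k ω) := by
  rw [hRW.hF n]
  exact (measurable_pi_apply (X := fun _ : Fin n => E) ⟨k, hk⟩).comp (comap_measurable _)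

/-- The natural filtration of the walk: the family `F` bundled as a `Filtration`. -/
def filtration (hRW : IsRWI P a h p α q S F) : Filtration ℕ ‹MeasurableSpace Ω› where
  seq := F
  mono' := fun i j hij => by
    rw [hRW.hF i]
    exact Measurable.comap_le (@measurable_pi_lambda _ _ _ (F j) _ _ fun k =>
      hRW.measurable_increment (k.2.trans_le hij))
  le' := fun n => by
    rw [hRW.hF n]
    exact Measurable.comap_le (measurable_pi_lambda _ fun k => (hRW.hSmeas _).sub (hRW.hSmeas _))

lemma measurable_position (hRW : IsRWI P a h p α q S F) (n : ℕ) : Measurable[F n] (S n) := by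
  have hS : S n = fun ω => ∑ k ∈ Finset.range n, (S (k + 1) ω - S k ω) := by
    ext1 ω
    rw [Finset.sum_range_sub (fun k => S k ω), hRW.hS0, sub_zero]
  rw [hS]
  exact Finset.measurable_fun_sum _ fun k hk => hRW.measurable_increment (Finset.mem_range.mp hk)

lemma stronglyAdapted_epsI (hRW : IsRWI P a h p α q S F) :
    StronglyAdapted hRW.filtration (epsI a h S) := fun n =>
  (measurable_vertexSign.comp (hRW.measurable_position n)).stronglyMeasurable

lemma epsI_zero (hRW : IsRWI P a h p α q S F) (ω : Ω) : epsI a h S 0 ω = 1 := by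
  rw [epsI, hRW.hS0]
  exact vertexSign_of_mem_V_zero hRW.ha.ne' zero_mem_V

lemma condExp_epsI_succ (hRW : IsRWI P a h p α q S F) (n : ℕ) :
    P[epsI a h S (n + 1) | hRW.filtration n] =ᵐ[P] fun ω => (2 * p - 1) * epsI a h S n ω :=
  (hRW.hTrans n (vertexSign a h) measurable_vertexSign ⟨1, abs_vertexSign_le_one⟩).trans <|
    ae_of_all _ fun ω => transition_vertexSign hRW.ha.ne' hRW.hqsum (S n ω)

lemma martingalePart_II (hRW : IsRWI P a h p α q S F) (n : ℕ) (ω : Ω) :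
    martingalePart (II a h S) hRW.filtration P n ω = 1 + NN P a h S F n ω := by
  rw [show II a h S = partialSum (epsI a h S) from rfl, martingalePart_partialSum, hRW.epsI_zero,
    NN, ← Finset.Ico_add_one_right_eq_Icc, Finset.sum_Ico_eq_sum_range]
  simp only [add_tsub_cancel_right, add_comm 1]
  rfl

lemma ae_two_mul_one_sub_mul_II_eq (hRW : IsRWI P a h p α q S F) :
    ∀ᵐ ω ∂P, ∀ n, 2 * (1 - p) * II a h S n ω =
      1 + NN P a h S F n ω - (2 * p - 1) * epsI a h S n ω := by
  filter_upwards [ae_one_sub_mul_partialSum_eq hRW.condExp_epsI_succ] with ω hω n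
  rw [← hRW.martingalePart_II n ω, show 2 * (1 - p) = 1 - (2 * p - 1) by ring]
  exact hω n

lemma ae_isBigO_II (hRW : IsRWI P a h p α q S F) (hp : p ≠ 1) :
    ∀ᵐ ω ∂P, (fun n => II a h S n ω) =O[atTop] fun n : ℕ => √(n * log n) := by
  have := hRW.prob
  exact ae_isBigO_partialSum hRW.stronglyAdapted_epsI
    (ae_of_all _ fun ω n => abs_vertexSign_le_one (S n ω)) hRW.condExp_epsI_succ
    fun hρ => hp (by linarith)

end IsRWI

end RWI

theorem rwi_occupation {Ω : Type} [MeasurableSpace Ω] (P : Measure Ω)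
    (a h p α : ℝ) (q : Fin 2 → Fin 3 → ℝ)
    (S : ℕ → Ω → RWI.E) (F : ℕ → MeasurableSpace Ω)
    (hRW : RWI.IsRWI P a h p α q S F) (hp : p < 1) :
    (∀ n : ℕ, 1 ≤ n → ∀ᵐ ω ∂P,
      2 * (1 - p) * RWI.II a h S n ω =
        1 + RWI.NN P a h S F n ω - (2 * p - 1) * RWI.epsI a h S n ω) ∧
    (∀ᵐ ω ∂P, Tendsto (fun n : ℕ => RWI.II a h S n ω / n) atTop (nhds 0)) ∧
    (∀ᵐ ω ∂P, ∃ C > (0 : ℝ), ∃ N₀ : ℕ, ∀ n ≥ N₀,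
      (RWI.II a h S n ω) ^ 2 ≤ C * (n * Real.log n)) := by
  refine ⟨fun n _ => hRW.ae_two_mul_one_sub_mul_II_eq.mono fun ω h => h n, ?_, ?_⟩
  · filter_upwards [hRW.ae_isBigO_II hp.ne] with ω hII
    exact (hII.trans_isLittleO sqrt_mul_log_isLittleO_natCast).tendsto_div_nhds_zero
  · filter_upwards [hRW.ae_isBigO_II hp.ne] with ω hII
    obtain ⟨C, hC, hbound⟩ := (hII.pow 2).exists_pos
    obtain ⟨N₀, hN₀⟩ := eventually_atTop.mp hbound.bound
    refine ⟨C, hC, N₀, fun n hn => ?_⟩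
    have hlog : 0 ≤ n * log n := mul_nonneg n.cast_nonneg (log_natCast_nonneg n)
    simpa only [norm_of_nonneg (sq_nonneg _), norm_of_nonneg hlog, sq_sqrt hlog] using hN₀ n hn
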